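/- arXiv:2210.15114 — 5 statements merged into one kernel-verified Lean document; each statement's English description precedes it below -/
import Mathlib

section
/- Let p be a positive even integer, x_1,…,x_n ∈ ℝ^d, y ∈ ℝ^n, and let A be the n×n matrix with A_{k,j} = ‖x_k − x_j‖_p^p. Then for every k ∈ [n], (Ay)(k) = Σ_{i=1}^d Σ_{t=0}^p binom(p,t) x_k(i)^t · S_{i,t}, where S_{i,t} := Σ_{j=1}^n y_j (−1)^{p−t} x_j(i)^{p−t}. -/
theorem sum_mul_sub_pow {ι R : Type*} [CommRing R] (s : Finset ι) (w b : ι → R) (a : R) (n : ℕ) :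
    ∑ j ∈ s, w j * (a - b j) ^ n =
      ∑ t ∈ Finset.range (n + 1),
        (n.choose t : R) * a ^ t * ∑ j ∈ s, w j * (-1 : R) ^ (n - t) * b j ^ (n - t) := by
  have expand_summand (j : ι) : w j * (a - b j) ^ n =
      ∑ t ∈ Finset.range (n + 1),
        (n.choose t : R) * a ^ t * (w j * (-1 : R) ^ (n - t) * b j ^ (n - t)) := by
    rw [sub_eq_add_neg, add_pow, Finset.mul_sum]
    refine Finset.sum_congr rfl fun t _ => ?_
    rw [neg_pow (b j)]
    ring
  simp only [expand_summand, Finset.mul_sum]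
  exact Finset.sum_comm

theorem lpp_even_matvec_formula_general {ι κ R : Type*} [Fintype ι] [Fintype κ]
    [CommRing R] [LinearOrder R] [IsOrderedRing R] {p : ℕ} (hpeven : Even p)
    (x : ι → κ → R) (y : ι → R) (A : ι → ι → R)
    (hA : ∀ k j, A k j = ∑ i, |x k i - x j i| ^ p) (k : ι) :
    ∑ j, y j * A k j =
      ∑ i, ∑ t ∈ Finset.range (p + 1),
        (p.choose t : R) * x k i ^ t * ∑ j, y j * (-1 : R) ^ (p - t) * x j i ^ (p - t) :=
  calc
    ∑ j, y j * A k j = ∑ j, ∑ i, y j * (x k i - x j i) ^ p := by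
      simp only [hA, hpeven.pow_abs, Finset.mul_sum]
    _ = ∑ i, ∑ j, y j * (x k i - x j i) ^ p := Finset.sum_comm
    _ = _ := Finset.sum_congr rfl fun i _ => sum_mul_sub_pow Finset.univ y (x · i) (x k i) p

/-- Matrix-vector product formula for the `ℓ_p^p` distance matrix, `p` even. -/
theorem lpp_even_matvec_formula (p n d : ℕ) (hp : 0 < p) (hpeven : Even p)
    (x : Fin n → Fin d → ℝ) (y : Fin n → ℝ) (A : Fin n → Fin n → ℝ)
    (hA : ∀ k j, A k j = ∑ i, |x k i - x j i| ^ p) (k : Fin n) :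
    ∑ j, y j * A k j =
      ∑ i, ∑ t ∈ Finset.range (p + 1),
        (p.choose t : ℝ) * x k i ^ t * ∑ j, y j * (-1 : ℝ) ^ (p - t) * x j i ^ (p - t) :=
  lpp_even_matvec_formula_general hpeven x y A hA k
end

section
/- Define f, g : {0,1} → [0,1] by f(0) = g(0) = 1/2, f(1) = 0, g(1) = 1, and extend them coordinatewise to {0,1}^d. Then for any pair of non-zero vectors a, b ∈ {0,1}^d: ‖f(a) − g(b)‖_∞ = 1 if a·b > 0, and ‖f(a) − g(b)‖_∞ = 1/2 if a·b = 0, where a·b = Σ_{i=1}^d a(i) b(i) is the dot product over the reals. -/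
/-!
On `{0, 1}` the gadget maps agree with `x ↦ (1 - x) / 2` and `y ↦ (1 + y) / 2`, so
`‖f(a) - g(b)‖_∞` is half the maximum of `a i + b i`. The rearrangement inequality
`x * 1 + 1 * y ≤ x * y + 1 * 1` for `x, y ≤ 1`, with equality if `x = 1` or `y = 1`, shows that
this maximum is `1` when all products `a i * b i` vanish and `a`, `b` are not both zero. If some
product is `1`, the maximum is `2`.
-/

theorem mem_Icc_of_eq_zero_or_eq_one {R : Type*} [Zero R] [One R] [Preorder R]
    [ZeroLEOneClass R] {x : R} (hx : x = 0 ∨ x = 1) : x ∈ Set.Icc 0 1 := by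
  rcases hx with rfl | rfl
  exacts [⟨le_rfl, zero_le_one⟩, ⟨zero_le_one, le_rfl⟩]

theorem add_le_one_add_mul {R : Type*} [Ring R] [PartialOrder R] [IsOrderedRing R] {x y : R}
    (hx : x ≤ 1) (hy : y ≤ 1) : x + y ≤ 1 + x * y := by
  simpa [add_comm] using mul_add_mul_le_mul_add_mul hx hy

theorem add_eq_one_add_mul {R : Type*} [NonAssocSemiring R] {x y : R}
    (h : x = 1 ∨ y = 1) : x + y = 1 + x * y := by
  rcases h with rfl | rfl
  · rw [one_mul]
  · rw [mul_one, add_comm]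

theorem exists_eq_one_of_sum_mul_ne_zero {ι R : Type*} [Fintype ι] [NonAssocSemiring R]
    {a b : ι → R} (ha : ∀ i, a i = 0 ∨ a i = 1) (hb : ∀ i, b i = 0 ∨ b i = 1)
    (h : ∑ i, a i * b i ≠ 0) : ∃ i, a i = 1 ∧ b i = 1 := by
  obtain ⟨i, -, hi⟩ := Finset.exists_ne_zero_of_sum_ne_zero h
  exact ⟨i, (ha i).resolve_left (left_ne_zero_of_mul hi),
    (hb i).resolve_left (right_ne_zero_of_mul hi)⟩

theorem mul_eq_zero_of_sum_mul_eq_zero {ι R : Type*} [Fintype ι] [Semiring R] [PartialOrder R]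
    [IsOrderedRing R] {a b : ι → R} (ha : ∀ i, 0 ≤ a i) (hb : ∀ i, 0 ≤ b i)
    (h : ∑ i, a i * b i = 0) (i : ι) : a i * b i = 0 :=
  (Finset.sum_eq_zero_iff_of_nonneg fun j _ ↦ mul_nonneg (ha j) (hb j)).1 h i (Finset.mem_univ i)

section Gadget

variable {f g : ℝ → ℝ}

theorem abs_sub_eq_add_div_two (hf0 : f 0 = 1 / 2) (hg0 : g 0 = 1 / 2) (hf1 : f 1 = 0)
    (hg1 : g 1 = 1) {x y : ℝ} (hx : x = 0 ∨ x = 1) (hy : y = 0 ∨ y = 1) :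
    |f x - g y| = (x + y) / 2 := by
  have hf : f x = (1 - x) / 2 := by rcases hx with rfl | rfl <;> simp [hf0, hf1]
  have hg : g y = (1 + y) / 2 := by rcases hy with rfl | rfl <;> norm_num [hg0, hg1]
  have hxy : 0 ≤ x + y :=
    add_nonneg (mem_Icc_of_eq_zero_or_eq_one hx).1 (mem_Icc_of_eq_zero_or_eq_one hy).1
  calc |f x - g y| = |-((x + y) / 2)| := by rw [hf, hg]; ring_nf
    _ = (x + y) / 2 := by rw [abs_neg, abs_of_nonneg (div_nonneg hxy zero_le_two)]

variable {ι : Type*} {a b : ι → ℝ}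

theorem iSup_abs_sub_eq_div_two (hf0 : f 0 = 1 / 2) (hg0 : g 0 = 1 / 2) (hf1 : f 1 = 0)
    (hg1 : g 1 = 1) (ha : ∀ i, a i = 0 ∨ a i = 1) (hb : ∀ i, b i = 0 ∨ b i = 1) {c : ℝ}
    (hc : IsGreatest (Set.range fun i ↦ a i + b i) c) :
    ⨆ i, |f (a i) - g (b i)| = c / 2 := by
  simp only [abs_sub_eq_add_div_two hf0 hg0 hf1 hg1 (ha _) (hb _), div_eq_mul_inv]
  rw [← Real.iSup_mul_of_nonneg (inv_nonneg.2 zero_le_two)]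
  exact congrArg (· * 2⁻¹) hc.csSup_eq

theorem ovp_gadget_general [Fintype ι] (ha01 : ∀ i, a i = 0 ∨ a i = 1)
    (hb01 : ∀ i, b i = 0 ∨ b i = 1) (hab : ∃ i, a i = 1 ∨ b i = 1)
    (hf0 : f 0 = 1 / 2) (hg0 : g 0 = 1 / 2) (hf1 : f 1 = 0) (hg1 : g 1 = 1) :
    (0 < ∑ i, a i * b i → (⨆ i, |f (a i) - g (b i)|) = 1) ∧
      ((∑ i, a i * b i) = 0 → (⨆ i, |f (a i) - g (b i)|) = 1 / 2) := by
  have ha i := mem_Icc_of_eq_zero_or_eq_one (ha01 i)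
  have hb i := mem_Icc_of_eq_zero_or_eq_one (hb01 i)
  constructor
  · intro hpos
    obtain ⟨j, haj, hbj⟩ := exists_eq_one_of_sum_mul_ne_zero ha01 hb01 hpos.ne'
    have hmax : IsGreatest (Set.range fun i ↦ a i + b i) (1 + 1) :=
      ⟨⟨j, congrArg₂ (· + ·) haj hbj⟩, Set.forall_mem_range.2 fun i ↦ add_le_add (ha i).2 (hb i).2⟩
    rw [iSup_abs_sub_eq_div_two hf0 hg0 hf1 hg1 ha01 hb01 hmax, add_self_div_two]
  · intro hzero
    have hmul := mul_eq_zero_of_sum_mul_eq_zero (fun i ↦ (ha i).1) (fun i ↦ (hb i).1) hzero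
    obtain ⟨j, hj⟩ := hab
    have hmax : IsGreatest (Set.range fun i ↦ a i + b i) 1 :=
      ⟨⟨j, by simpa [hmul j] using add_eq_one_add_mul hj⟩,
        Set.forall_mem_range.2 fun i ↦ by simpa [hmul i] using add_le_one_add_mul (ha i).2 (hb i).2⟩
    exact iSup_abs_sub_eq_div_two hf0 hg0 hf1 hg1 ha01 hb01 hmax

end Gadget

/-- OVP reduction gadget: with `f(0) = g(0) = 1/2`, `f(1) = 0`, `g(1) = 1` applied
coordinatewise, for non-zero binary vectors `a, b`, `‖f(a) − g(b)‖_∞ = 1` iff `a·b > 0`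
and `‖f(a) − g(b)‖_∞ = 1/2` iff `a·b = 0`. -/
theorem ovp_gadget (d : ℕ) (a b : Fin d → ℝ)
    (ha01 : ∀ i, a i = 0 ∨ a i = 1) (hb01 : ∀ i, b i = 0 ∨ b i = 1)
    (ha : ∃ i, a i = 1) (hb : ∃ i, b i = 1)
    (f g : ℝ → ℝ) (hf0 : f 0 = 1 / 2) (hg0 : g 0 = 1 / 2) (hf1 : f 1 = 0) (hg1 : g 1 = 1) :
    (0 < ∑ i, a i * b i → (⨆ i, |f (a i) - g (b i)|) = 1) ∧
      ((∑ i, a i * b i) = 0 → (⨆ i, |f (a i) - g (b i)|) = 1 / 2) :=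
  ovp_gadget_general ha01 hb01 (ha.imp fun _ ↦ Or.inl) hf0 hg0 hf1 hg1
end

section
/- Define f, g : {0,1} → [0,1] by f(0) = g(0) = 1/2, f(1) = 0, g(1) = 1, extended coordinatewise to {0,1}^d. Let a^1,…,a^n and b^1,…,b^n be non-zero vectors in {0,1}^d. Then Σ_{i=1}^n Σ_{j=1}^n ‖f(a^i) − g(b^j)‖_∞ < n² if and only if there exist i, j ∈ [n] with a^i · b^j = 0 (dot product over the reals). -/
/-!
For `x, y ∈ {0, 1}` the number `|f x - g y|` is `1` if `x = y = 1` and at most `1 / 2` otherwise.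
Hence `‖f(a) - g(b)‖_∞` is at most `1`, and it is less than `1` exactly when no coordinate of `a`
and `b` is `1` in both vectors, that is, when `a` and `b` are orthogonal. A sum of terms that are
at most `1` falls short of the number of terms exactly when one of them is less than `1`.
-/

theorem sum_lt_sum_iff_exists_lt {ι M : Type*} [AddCommMonoid M] [LinearOrder M]
    [IsOrderedCancelAddMonoid M] {s : Finset ι} {u v : ι → M} (huv : ∀ i ∈ s, u i ≤ v i) :
    ∑ i ∈ s, u i < ∑ i ∈ s, v i ↔ ∃ i ∈ s, u i < v i :=
  ⟨Finset.exists_lt_of_sum_lt, Finset.sum_lt_sum huv⟩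

theorem sum_sum_lt_card_mul_card_iff {ι κ R : Type*} [Fintype ι] [Fintype κ] [NonAssocSemiring R]
    [LinearOrder R] [IsOrderedCancelAddMonoid R] {u : ι → κ → R} (hu : ∀ i j, u i j ≤ 1) :
    ∑ i, ∑ j, u i j < (Fintype.card ι : R) * Fintype.card κ ↔ ∃ i j, u i j < 1 := by
  have card_eq_sum : (Fintype.card ι : R) * Fintype.card κ = ∑ _p : ι × κ, 1 := by simp
  rw [card_eq_sum, ← Fintype.sum_prod_type',
    sum_lt_sum_iff_exists_lt fun p _ => hu p.1 p.2]
  simp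

-- Positivity of `c` covers the empty index type, over which the supremum is `0`.
theorem real_iSup_lt_iff_of_pos {τ : Type*} [Finite τ] {u : τ → ℝ} {c : ℝ} (hc : 0 < c) :
    ⨆ t, u t < c ↔ ∀ t, u t < c := by
  rcases isEmpty_or_nonempty τ with hτ | hτ
  · simpa using hc
  · refine ⟨fun h t => (le_ciSup (Set.finite_range u).bddAbove t).trans_lt h, fun h => ?_⟩
    obtain ⟨t, ht⟩ := exists_eq_ciSup_of_finite (f := u)
    exact ht ▸ h t

theorem dotProduct_eq_zero_iff_of_nonneg {τ R : Type*} [Fintype τ] [NonUnitalNonAssocSemiring R]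
    [PartialOrder R] [IsOrderedAddMonoid R] [PosMulMono R] {u v : τ → R} (hu : ∀ t, 0 ≤ u t)
    (hv : ∀ t, 0 ≤ v t) : u ⬝ᵥ v = 0 ↔ ∀ t, u t * v t = 0 := by
  simpa [dotProduct] using Finset.sum_eq_zero_iff_of_nonneg (s := Finset.univ)
    fun t _ => mul_nonneg (hu t) (hv t)

/-- The two coordinate maps of the reduction from orthogonal vectors to `ℓ∞` distances: `f` encodes
the first family of vectors and `g` the second. Only the values at `0` and `1` are prescribed, and
`R` is the type in which the vectors have their `0`-`1` entries. -/
structure IsOrthogonalityGadget {R : Type*} [Zero R] [One R] (f g : R → ℝ) : Prop where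
  left_zero : f 0 = 1 / 2
  right_zero : g 0 = 1 / 2
  left_one : f 1 = 0
  right_one : g 1 = 1

namespace IsOrthogonalityGadget

section Coordinate

variable {R : Type*} {f g : R → ℝ} {x y : R}

theorem abs_sub_le_one [Zero R] [One R] (hfg : IsOrthogonalityGadget f g)
    (hx : x = 0 ∨ x = 1) (hy : y = 0 ∨ y = 1) : |f x - g y| ≤ 1 := by
  rcases hx with rfl | rfl <;> rcases hy with rfl | rfl <;>
    norm_num [hfg.left_zero, hfg.right_zero, hfg.left_one, hfg.right_one, abs_le]

theorem abs_sub_lt_one_iff_mul_eq_zero [MulZeroOneClass R] [Nontrivial R]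
    (hfg : IsOrthogonalityGadget f g) (hx : x = 0 ∨ x = 1) (hy : y = 0 ∨ y = 1) :
    |f x - g y| < 1 ↔ x * y = 0 := by
  rcases hx with rfl | rfl <;> rcases hy with rfl | rfl <;>
    norm_num [hfg.left_zero, hfg.right_zero, hfg.left_one, hfg.right_one, abs_lt]

end Coordinate

section Vector

variable {τ R : Type*} {f g : R → ℝ} {u v : τ → R}

theorem iSup_abs_sub_le_one [Zero R] [One R] (hfg : IsOrthogonalityGadget f g)
    (hu : ∀ t, u t = 0 ∨ u t = 1) (hv : ∀ t, v t = 0 ∨ v t = 1) :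
    ⨆ t, |f (u t) - g (v t)| ≤ 1 :=
  Real.iSup_le (fun t => hfg.abs_sub_le_one (hu t) (hv t)) zero_le_one

theorem iSup_abs_sub_lt_one_iff_dotProduct_eq_zero [Fintype τ] [Semiring R] [PartialOrder R]
    [IsOrderedRing R] [Nontrivial R] (hfg : IsOrthogonalityGadget f g)
    (hu : ∀ t, u t = 0 ∨ u t = 1) (hv : ∀ t, v t = 0 ∨ v t = 1) :
    ⨆ t, |f (u t) - g (v t)| < 1 ↔ u ⬝ᵥ v = 0 := by
  have nonneg_of_zero_or_one {x : R} (hx : x = 0 ∨ x = 1) : 0 ≤ x := by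
    rcases hx with rfl | rfl
    exacts [le_rfl, zero_le_one]
  calc ⨆ t, |f (u t) - g (v t)| < 1
      ↔ ∀ t, |f (u t) - g (v t)| < 1 := real_iSup_lt_iff_of_pos one_pos
    _ ↔ ∀ t, u t * v t = 0 :=
      forall_congr' fun t => hfg.abs_sub_lt_one_iff_mul_eq_zero (hu t) (hv t)
    _ ↔ u ⬝ᵥ v = 0 := (dotProduct_eq_zero_iff_of_nonneg
      (fun t => nonneg_of_zero_or_one (hu t)) fun t => nonneg_of_zero_or_one (hv t)).symm

end Vector

end IsOrthogonalityGadget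

theorem ovp_reduction_general {ι κ τ R : Type*} [Fintype ι] [Fintype κ] [Fintype τ] [Semiring R]
    [PartialOrder R] [IsOrderedRing R] [Nontrivial R] {f g : R → ℝ}
    (hfg : IsOrthogonalityGadget f g) {a : ι → τ → R} {b : κ → τ → R}
    (ha : ∀ i t, a i t = 0 ∨ a i t = 1) (hb : ∀ j t, b j t = 0 ∨ b j t = 1) :
    ∑ i, ∑ j, ⨆ t, |f (a i t) - g (b j t)| < (Fintype.card ι : ℝ) * Fintype.card κ ↔
      ∃ i j, a i ⬝ᵥ b j = 0 := by
  rw [sum_sum_lt_card_mul_card_iff fun i j => hfg.iSup_abs_sub_le_one (ha i) (hb j)]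
  exact exists₂_congr fun i j =>
    hfg.iSup_abs_sub_lt_one_iff_dotProduct_eq_zero (ha i) (hb j)

/-- Core of the OVP reduction: the total sum of the `ℓ∞` cross-distances of the gadget
point sets is below `n²` iff some pair of vectors is orthogonal. -/
theorem ovp_reduction (n d : ℕ) (a b : Fin n → Fin d → ℝ)
    (ha01 : ∀ i t, a i t = 0 ∨ a i t = 1) (hb01 : ∀ j t, b j t = 0 ∨ b j t = 1)
    (ha : ∀ i, ∃ t, a i t = 1) (hb : ∀ j, ∃ t, b j t = 1)
    (f g : ℝ → ℝ) (hf0 : f 0 = 1 / 2) (hg0 : g 0 = 1 / 2) (hf1 : f 1 = 0) (hg1 : g 1 = 1) :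
    (∑ i, ∑ j, ⨆ t, |f (a i t) - g (b j t)|) < (n : ℝ) ^ 2 ↔
      ∃ i j, (∑ t, a i t * b j t) = 0 := by
  simpa only [sq, Fintype.card_fin, dotProduct] using
    ovp_reduction_general ⟨hf0, hg0, hf1, hg1⟩ ha01 hb01
end

section
/- There exists a constant c > 0 such that for every real t ≥ 2 and every ε ∈ (0,1), there exists a real polynomial T of degree at most c·√t·log(t/ε) with |T(x)| ≤ ε/t for all x ∈ [0, 1/(10t)] and |T(x) − 1| ≤ ε/t² for all x ∈ [1/t, 1]. -/
/-!
For `n ^ 2 ≥ t` the Chebyshev polynomial `Tₙ` evaluated at `1 + (1 - t * x) / n ^ 2` has absolute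
value at most `1` on `[1 / t, 1]`, while `1 + n ^ 2 * y ≤ Tₙ (1 + y) ≤ exp (n ^ 2 * y)` confines it
to `[1.9, e]` on `[0, 1 / (10 * t)]`. So after an affine normalisation a polynomial of degree
`n ≈ √t` maps the two intervals into `[0, 2/5]` and `[29/50, 1]`, on either side of `1/2`.
Composing it with the probability that `2 * j + 1` independent trials of success probability `y`
produce at most `j` successes pushes these values to within `exp (-j / 40)` of `1` and `0`, and
`j ≈ log (t / ε)` suffices.
-/

section

open Polynomial Finset

lemma exp_neg_le_inv_pow {u a : ℝ} {k : ℕ} (hu : 0 < u) (ha : k * Real.log u ≤ a) :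
    Real.exp (-a) ≤ (u ^ k)⁻¹ := by
  have hpow : u ^ k ≤ Real.exp a := by
    rwa [← Real.log_le_iff_le_exp (pow_pos hu k), Real.log_pow]
  rw [Real.exp_neg]
  gcongr

lemma one_add_sq_div_two_le_cosh (x : ℝ) : 1 + x ^ 2 / 2 ≤ Real.cosh x := by
  have h : (x / 2) ^ 2 ≤ Real.sinh (x / 2) ^ 2 := by
    rw [sq_le_sq, Real.abs_sinh]
    exact Real.self_le_sinh_iff.2 (abs_nonneg _)
  calc 1 + x ^ 2 / 2 = 1 + 2 * (x / 2) ^ 2 := by ring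
    _ ≤ 1 + 2 * Real.sinh (x / 2) ^ 2 := by gcongr
    _ = Real.cosh (2 * (x / 2)) := by rw [Real.cosh_two_mul, Real.cosh_sq]; ring
    _ = Real.cosh x := by rw [mul_div_cancel₀ x two_ne_zero]

/-- The probability that a binomial variable with `2 * j + 1` trials is at most `j`, as a polynomial
in the success probability; it approximates the indicator function of `[0, 1/2]` on `[0, 1]`. The
number of trials is odd so that there are no ties. -/
noncomputable def binomialMinority (R : Type*) [CommRing R] (j : ℕ) : R[X] :=
  ∑ k ∈ range (j + 1), bernsteinPolynomial R (2 * j + 1) k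

namespace binomialMinority

section CommRing

variable (R : Type*) [CommRing R]

lemma natDegree_le (j : ℕ) : (binomialMinority R j).natDegree ≤ 2 * j + 1 := by
  refine natDegree_sum_le_of_forall_le _ _ fun k hk => ?_
  have hk : k ≤ 2 * j + 1 := by have := mem_range.1 hk; omega
  rw [bernsteinPolynomial]
  compute_degree
  omega

lemma comp_one_sub_X (j : ℕ) :
    (binomialMinority R j).comp (1 - X) = 1 - binomialMinority R j := by
  have upper_half : (binomialMinority R j).comp (1 - X) =
      ∑ k ∈ range (j + 1), bernsteinPolynomial R (2 * j + 1) (j + 1 + k) := by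
    rw [binomialMinority, Polynomial.sum_comp, ← sum_range_reflect]
    refine sum_congr rfl fun k hk => ?_
    have hk : k ≤ j := Nat.lt_succ_iff.1 (mem_range.1 hk)
    rw [bernsteinPolynomial.flip R _ _ (by omega)]
    congr 1
    omega
  rw [upper_half, eq_sub_iff_add_eq', binomialMinority, ← sum_range_add,
    show (j + 1) + (j + 1) = 2 * j + 1 + 1 by ring, bernsteinPolynomial.sum]

end CommRing

variable {j : ℕ} {y : ℝ}

lemma eval_nonneg (h₀ : 0 ≤ y) (h₁ : y ≤ 1) : 0 ≤ (binomialMinority ℝ j).eval y := by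
  have : 0 ≤ 1 - y := sub_nonneg.2 h₁
  simp only [binomialMinority, bernsteinPolynomial, eval_finsetSum, eval_mul, eval_pow, eval_sub,
    eval_X, eval_one, eval_natCast]
  positivity

lemma eval_le_pow (h₀ : 1 / 2 ≤ y) (h₁ : y ≤ 1) :
    (binomialMinority ℝ j).eval y ≤ (4 * (y * (1 - y))) ^ j := by
  have : 0 ≤ y := by linarith
  have : 0 ≤ 1 - y := sub_nonneg.2 h₁
  have monomial_le {k : ℕ} (hk : k ≤ j) :
      y ^ k * (1 - y) ^ (2 * j + 1 - k) ≤ (y * (1 - y)) ^ j := by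
    obtain ⟨i, rfl⟩ := Nat.exists_eq_add_of_le hk
    calc y ^ k * (1 - y) ^ (2 * (k + i) + 1 - k)
        = y ^ k * (1 - y) ^ (k + i) * (1 - y) ^ i * (1 - y) := by
          rw [show 2 * (k + i) + 1 - k = (k + i) + i + 1 by omega]; ring
      _ ≤ y ^ k * (1 - y) ^ (k + i) * y ^ i * 1 := by gcongr <;> linarith
      _ = (y * (1 - y)) ^ (k + i) := by rw [mul_one, mul_pow, pow_add y]; ring
  calc (binomialMinority ℝ j).eval y
      = ∑ k ∈ range (j + 1), ((2 * j + 1).choose k : ℝ) * (y ^ k * (1 - y) ^ (2 * j + 1 - k)) := by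
        simp [binomialMinority, bernsteinPolynomial, eval_finsetSum, mul_assoc]
    _ ≤ ∑ k ∈ range (j + 1), ((2 * j + 1).choose k : ℝ) * (y * (1 - y)) ^ j := by
        gcongr with k hk
        exact monomial_le (Nat.lt_succ_iff.1 (mem_range.1 hk))
    _ = (4 * (y * (1 - y))) ^ j := by
        rw [← sum_mul, ← Nat.cast_sum, Nat.sum_range_choose_halfway, mul_pow 4,
          Nat.cast_pow, Nat.cast_ofNat]

lemma abs_eval_le_exp (h₀ : 1 / 2 ≤ y) (h₁ : y ≤ 1) :
    |(binomialMinority ℝ j).eval y| ≤ Real.exp (-(j * (2 * y - 1) ^ 2)) := by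
  have hy : 0 ≤ y * (1 - y) := mul_nonneg (by linarith) (by linarith)
  calc |(binomialMinority ℝ j).eval y|
      = (binomialMinority ℝ j).eval y := abs_of_nonneg (eval_nonneg (by linarith) h₁)
    _ ≤ (4 * (y * (1 - y))) ^ j := eval_le_pow h₀ h₁
    _ = (1 - (2 * y - 1) ^ 2) ^ j := by ring
    _ ≤ Real.exp (-(2 * y - 1) ^ 2) ^ j := by
        gcongr
        · linarith
        · exact Real.one_sub_le_exp_neg _
    _ = Real.exp (-(j * (2 * y - 1) ^ 2)) := by rw [← Real.exp_nat_mul, mul_neg]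

lemma abs_eval_sub_one_le_exp (h₀ : 0 ≤ y) (h₁ : y ≤ 1 / 2) :
    |(binomialMinority ℝ j).eval y - 1| ≤ Real.exp (-(j * (2 * y - 1) ^ 2)) := by
  have eval_flip : (binomialMinority ℝ j).eval (1 - y) = 1 - (binomialMinority ℝ j).eval y := by
    simpa using congr_arg (eval y) (comp_one_sub_X ℝ j)
  rw [abs_sub_comm, ← eval_flip]
  convert! abs_eval_le_exp (j := j) (y := 1 - y) (by linarith) (by linarith) using 4
  ring

end binomialMinority

lemma eval_T_one_add_le_exp (n : ℤ) {x : ℝ} (hx : 0 ≤ x) :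
    (Chebyshev.T ℝ n).eval (1 + x) ≤ Real.exp (n ^ 2 * x) := by
  obtain ⟨θ, hθ⟩ : ∃ θ, Real.cosh θ = 1 + x :=
    ⟨Real.arcosh (1 + x), Real.cosh_arcosh (le_add_of_nonneg_right hx)⟩
  have hθx : θ ^ 2 / 2 ≤ x := by linarith [one_add_sq_div_two_le_cosh θ]
  calc (Chebyshev.T ℝ n).eval (1 + x) = Real.cosh (n * θ) := by
        rw [← hθ, Chebyshev.T_real_cosh]
    _ ≤ Real.exp ((n * θ) ^ 2 / 2) := Real.cosh_le_exp_half_sq _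
    _ = Real.exp (n ^ 2 * (θ ^ 2 / 2)) := by ring_nf
    _ ≤ Real.exp (n ^ 2 * x) := by gcongr

lemma two_mul_add_one_mul_le_eval_T_succ_sub (n : ℕ) {x : ℝ} (hx : 0 ≤ x) :
    (2 * n + 1) * x ≤
      (Chebyshev.T ℝ (n + 1)).eval (1 + x) - (Chebyshev.T ℝ n).eval (1 + x) := by
  induction n with
  | zero => simp
  | succ n ih =>
    have recurrence : (Chebyshev.T ℝ (n + 2)).eval (1 + x) =
        2 * (1 + x) * (Chebyshev.T ℝ (n + 1)).eval (1 + x) - (Chebyshev.T ℝ n).eval (1 + x) := by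
      simp [Chebyshev.T_add_two]
    have growth : x * 1 ≤ x * (Chebyshev.T ℝ (n + 1)).eval (1 + x) := by
      gcongr
      exact Chebyshev.one_le_eval_T_real _ (le_add_of_nonneg_right hx)
    push_cast
    rw [add_assoc (n : ℤ) 1 1, one_add_one_eq_two]
    linarith

lemma one_add_sq_mul_le_eval_T_one_add (n : ℕ) {x : ℝ} (hx : 0 ≤ x) :
    1 + n ^ 2 * x ≤ (Chebyshev.T ℝ n).eval (1 + x) := by
  induction n with
  | zero => simp
  | succ n ih =>
    have := two_mul_add_one_mul_le_eval_T_succ_sub n hx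
    push_cast
    linarith

/-- The Chebyshev polynomial of degree `n`, with an affine change of variable and an affine
normalisation chosen so that it separates `{x | t * x ≤ 1 / 10}` from `{x | 1 ≤ t * x}` by the level
`1 / 2`. -/
noncomputable def chebyshevSeparator (n : ℕ) (t : ℝ) : ℝ[X] :=
  C (1 / 5) * (1 + (Chebyshev.T ℝ n).comp (C (1 + 1 / (n : ℝ) ^ 2) - C (t / (n : ℝ) ^ 2) * X))

namespace chebyshevSeparator

variable {n : ℕ} {t x : ℝ}

lemma natDegree_le (n : ℕ) (t : ℝ) : (chebyshevSeparator n t).natDegree ≤ n := by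
  set ℓ : ℝ[X] := C (1 + 1 / (n : ℝ) ^ 2) - C (t / (n : ℝ) ^ 2) * X with hℓ
  have hℓ_deg : ℓ.natDegree ≤ 1 := by rw [hℓ]; compute_degree
  have hT : ((Chebyshev.T ℝ n).comp ℓ).natDegree ≤ n := by
    simpa [natDegree_comp] using Nat.mul_le_mul_left n hℓ_deg
  exact (natDegree_C_mul_le _ _).trans (natDegree_add_le_of_degree_le (by simp) hT)

lemma eval_eq (n : ℕ) (t x : ℝ) : (chebyshevSeparator n t).eval x =
    (1 + (Chebyshev.T ℝ n).eval (1 + (1 - t * x) / n ^ 2)) / 5 := by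
  rw [show 1 + (1 - t * x) / (n : ℝ) ^ 2 = 1 + 1 / (n : ℝ) ^ 2 - t / (n : ℝ) ^ 2 * x by ring]
  simp only [chebyshevSeparator, eval_mul, eval_C, eval_add, eval_one, eval_comp, eval_sub, eval_X]
  ring

lemma le_eval (hn : n ≠ 0) (hx : t * x ≤ 1) :
    (3 - t * x) / 5 ≤ (chebyshevSeparator n t).eval x := by
  have hy : 0 ≤ (1 - t * x) / (n : ℝ) ^ 2 := div_nonneg (sub_nonneg.2 hx) (sq_nonneg _)
  have hT := one_add_sq_mul_le_eval_T_one_add n hy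
  rw [mul_div_cancel₀ _ (by positivity)] at hT
  rw [eval_eq]
  linarith

lemma eval_le_one (hx₀ : 0 ≤ t * x) (hx₁ : t * x ≤ 1) : (chebyshevSeparator n t).eval x ≤ 1 := by
  have hy : 0 ≤ (1 - t * x) / (n : ℝ) ^ 2 := div_nonneg (sub_nonneg.2 hx₁) (sq_nonneg _)
  have hexp : (n : ℝ) ^ 2 * ((1 - t * x) / n ^ 2) ≤ 1 := by
    calc (n : ℝ) ^ 2 * ((1 - t * x) / n ^ 2) = (1 - t * x) * ((n : ℝ) ^ 2 / n ^ 2) := by ring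
      _ ≤ 1 * 1 := by
        gcongr
        · linarith
        · exact div_self_le_one _
      _ = 1 := one_mul 1
  have hT := (eval_T_one_add_le_exp n hy).trans (Real.exp_le_exp.2 hexp)
  rw [eval_eq]
  linarith [Real.exp_one_lt_three]

lemma eval_mem_Icc_of_one_le (hx₀ : 1 ≤ t * x) (hx₁ : t * x ≤ 1 + 2 * n ^ 2) :
    (chebyshevSeparator n t).eval x ∈ Set.Icc 0 (2 / 5) := by
  have hz : 1 + (1 - t * x) / (n : ℝ) ^ 2 ∈ Set.Icc (-1) 1 := by
    have hle : (1 - t * x) / (n : ℝ) ^ 2 ≤ 0 :=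
      div_nonpos_of_nonpos_of_nonneg (by linarith) (sq_nonneg _)
    have hge : (t * x - 1) / (n : ℝ) ^ 2 ≤ 2 :=
      div_le_of_le_mul₀ (sq_nonneg _) zero_le_two (by linarith)
    rw [← neg_sub, neg_div] at hle ⊢
    constructor <;> linarith
  obtain ⟨h₀, h₁⟩ := Chebyshev.eval_T_real_mem_Icc n hz
  rw [eval_eq]
  constructor <;> linarith

end chebyshevSeparator

/-- The Chebyshev separator sharpened by the binomial minority polynomial: it is close to `0` where
`0 ≤ t * x ≤ 1 / 10` and close to `1` where `1 ≤ t * x ≤ 1 + 2 * n ^ 2`. -/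
noncomputable def chebyshevThreshold (n j : ℕ) (t : ℝ) : ℝ[X] :=
  (binomialMinority ℝ j).comp (chebyshevSeparator n t)

namespace chebyshevThreshold

variable {n : ℕ} {t x : ℝ}

lemma natDegree_le (n j : ℕ) (t : ℝ) :
    (chebyshevThreshold n j t).natDegree ≤ (2 * j + 1) * n :=
  natDegree_comp_le.trans <|
    Nat.mul_le_mul (binomialMinority.natDegree_le ℝ j) (chebyshevSeparator.natDegree_le n t)

lemma natDegree_ceil_le {r L : ℝ} (hr : 2⁻¹ ≤ r) (hL : 1 / 2 ≤ L) (t : ℝ) :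
    ((chebyshevThreshold ⌈r⌉₊ ⌈80 * L⌉₊ t).natDegree : ℝ) ≤ 644 * r * L := by
  have hn : (⌈r⌉₊ : ℝ) ≤ 2 * r := Nat.ceil_le_two_mul hr
  have hj : (⌈80 * L⌉₊ : ℝ) ≤ 2 * (80 * L) := Nat.ceil_le_two_mul (by linarith)
  calc ((chebyshevThreshold ⌈r⌉₊ ⌈80 * L⌉₊ t).natDegree : ℝ)
      ≤ (2 * ⌈80 * L⌉₊ + 1) * ⌈r⌉₊ := mod_cast natDegree_le _ _ _
    _ ≤ (2 * (2 * (80 * L)) + 2 * L) * (2 * r) := by gcongr; linarith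
    _ = 644 * r * L := by ring

lemma abs_eval_le (hn : n ≠ 0) (j : ℕ) (hx₀ : 0 ≤ t * x) (hx₁ : t * x ≤ 1 / 10) :
    |(chebyshevThreshold n j t).eval x| ≤ Real.exp (-(j / 40)) := by
  have hlow := chebyshevSeparator.le_eval hn (t := t) (x := x) (by linarith)
  have hup := chebyshevSeparator.eval_le_one (n := n) hx₀ (by linarith)
  set y := (chebyshevSeparator n t).eval x
  have gap : (40 : ℝ)⁻¹ ≤ (2 * y - 1) ^ 2 := by nlinarith
  rw [chebyshevThreshold, eval_comp, div_eq_mul_inv]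
  refine (binomialMinority.abs_eval_le_exp (by linarith) hup).trans ?_
  gcongr

lemma abs_eval_sub_one_le (j : ℕ) (hx₀ : 1 ≤ t * x) (hx₁ : t * x ≤ 1 + 2 * n ^ 2) :
    |(chebyshevThreshold n j t).eval x - 1| ≤ Real.exp (-(j / 40)) := by
  obtain ⟨hlow, hup⟩ := chebyshevSeparator.eval_mem_Icc_of_one_le hx₀ hx₁
  set y := (chebyshevSeparator n t).eval x
  have gap : (40 : ℝ)⁻¹ ≤ (2 * y - 1) ^ 2 := by nlinarith
  rw [chebyshevThreshold, eval_comp, div_eq_mul_inv]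
  refine (binomialMinority.abs_eval_sub_one_le_exp hlow (by linarith)).trans ?_
  gcongr

end chebyshevThreshold

end

/-- Chebyshev-type approximation: a polynomial of degree `O(√t · log(t/ε))` that is
`(ε/t)`-small on `[0, 1/(10t)]` and `(ε/t²)`-close to `1` on `[1/t, 1]`. -/
theorem chebyshev_two_sided_threshold_poly :
    ∃ c : ℝ, 0 < c ∧ ∀ t : ℝ, 2 ≤ t → ∀ ε : ℝ, ε ∈ Set.Ioo (0 : ℝ) 1 →
      ∃ T : Polynomial ℝ,
        (T.natDegree : ℝ) ≤ c * Real.sqrt t * Real.log (t / ε) ∧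
        (∀ x ∈ Set.Icc (0 : ℝ) (1 / (10 * t)), |T.eval x| ≤ ε / t) ∧
        ∀ x ∈ Set.Icc (1 / t) 1, |T.eval x - 1| ≤ ε / t ^ 2 := by
  refine ⟨644, by norm_num, fun t ht ε ⟨hε₀, hε₁⟩ => ?_⟩
  have ht₀ : 0 < t := by linarith
  have hr : 1 ≤ √t := Real.one_le_sqrt.2 (by linarith)
  have hL : 1 / 2 ≤ Real.log (t / ε) := by
    have htε : 2 ≤ t / ε := by rw [le_div_iff₀ hε₀]; linarith
    linarith [Real.log_two_gt_d9, Real.log_le_log two_pos htε]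
  set n := ⌈√t⌉₊
  set j := ⌈80 * Real.log (t / ε)⌉₊
  have hn : n ≠ 0 := (Nat.ceil_pos.2 (by linarith)).ne'
  have hn_sq : t ≤ (n : ℝ) ^ 2 := (Real.sqrt_le_left (by positivity)).1 (Nat.le_ceil _)
  have herr : Real.exp (-(j / 40)) ≤ ε / t ^ 2 := calc
    Real.exp (-(j / 40)) ≤ ((t / ε) ^ 2)⁻¹ := exp_neg_le_inv_pow (by positivity) <| by
      linarith [Nat.le_ceil (80 * Real.log (t / ε))]
    _ = ε ^ 2 / t ^ 2 := by rw [div_pow, inv_div]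
    _ ≤ ε / t ^ 2 := by gcongr; exact pow_le_of_le_one hε₀.le hε₁.le two_ne_zero
  refine ⟨chebyshevThreshold n j t, chebyshevThreshold.natDegree_ceil_le (by linarith) hL t,
    fun x ⟨hx₀, hx₁⟩ => ?_, fun x ⟨hx₀, hx₁⟩ => ?_⟩
  · have hx : t * x ≤ 1 / 10 := by rw [le_div_iff₀ (by positivity)] at hx₁; linarith
    refine (chebyshevThreshold.abs_eval_le hn j (by positivity) hx).trans (herr.trans ?_)
    gcongr
    exact le_self_pow₀ (by linarith) two_ne_zero
  · have hx : 1 ≤ t * x := (div_le_iff₀' ht₀).1 hx₀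
    exact (chebyshevThreshold.abs_eval_sub_one_le j hx (by nlinarith)).trans herr
end

section
/- Let d ≥ 2 and i ≥ 1 be integers and let p be a real number with p ≥ 2·i·ln d. Then d·i^p ≤ (i+1)^p. Consequently, for any integer M ≥ i and any x, y ∈ {0, 1, …, M}^d: if ‖x − y‖_∞ ≤ i then Σ_{j=1}^d |x(j) − y(j)|^p ≤ d·i^p, while if ‖x − y‖_∞ ≥ i + 1 then Σ_{j=1}^d |x(j) − y(j)|^p ≥ (i+1)^p ≥ d·i^p. -/
/-!
Since `log (s / r) ≥ 1 - r / s`, an exponent `p ≥ s * log c / (s - r)` makes `(s / r) ^ p ≥ c`.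
With `c` the number of coordinates, even a vector whose entries all equal `r` has `∑ j, f j ^ p`
at most `s ^ p`, which a single entry `≥ s` already attains. For `r = i` and `s = i + 1` the
condition is `p ≥ (i + 1) * log d`, and `i + 1 ≤ 2 * i`.
-/

open Real

lemma sub_div_le_log_sub_log {r s : ℝ} (hr : 0 < r) (hs : 0 < s) :
    (s - r) / s ≤ log s - log r := by
  rw [← log_div hs.ne' hr.ne', sub_div, div_self hs.ne', ← inv_div s r]
  exact one_sub_inv_le_log_of_pos (div_pos hs hr)

lemma mul_rpow_le_rpow_of_mul_log_le {c r s p : ℝ} (hc : 0 < c) (hr : 0 < r) (hs : 0 < s)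
    (hp : 0 ≤ p) (h : s * log c ≤ p * (s - r)) : c * r ^ p ≤ s ^ p := by
  have hlog : log c ≤ p * (log s - log r) :=
    calc
      log c ≤ p * (s - r) / s := (le_div_iff₀' hs).2 h
      _ = p * ((s - r) / s) := mul_div_assoc ..
      _ ≤ p * (log s - log r) := by gcongr; exact sub_div_le_log_sub_log hr hs
  rw [← log_le_log_iff (by positivity) (by positivity), log_mul hc.ne' (by positivity),
    log_rpow hr, log_rpow hs]
  linarith

section FiniteFamily

variable {ι : Type*} [Fintype ι] {f : ι → ℝ} {p : ℝ}

lemma sum_rpow_le_card_mul_rpow_of_iSup_le {r : ℝ} (hf : ∀ j, 0 ≤ f j) (hp : 0 ≤ p)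
    (h : (⨆ j, f j) ≤ r) : ∑ j, f j ^ p ≤ Fintype.card ι * r ^ p := by
  have hle (j : ι) : f j ≤ r := (le_ciSup (Set.finite_range f).bddAbove j).trans h
  simpa using Finset.sum_le_card_nsmul Finset.univ (fun j ↦ f j ^ p) (r ^ p)
    fun j _ ↦ rpow_le_rpow (hf j) (hle j) hp

lemma rpow_le_sum_rpow_of_le_iSup [Nonempty ι] {s : ℝ} (hf : ∀ j, 0 ≤ f j) (hs : 0 ≤ s)
    (hp : 0 ≤ p) (h : s ≤ ⨆ j, f j) : s ^ p ≤ ∑ j, f j ^ p := by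
  obtain ⟨j, hj⟩ := exists_eq_ciSup_of_finite (f := f)
  calc
    s ^ p ≤ f j ^ p := rpow_le_rpow hs (hj ▸ h) hp
    _ ≤ ∑ k, f k ^ p :=
      Finset.single_le_sum (f := fun k ↦ f k ^ p) (fun k _ ↦ rpow_nonneg (hf k) p)
        (Finset.mem_univ j)

end FiniteFamily

theorem linf_threshold_separation_general {ι : Type*} [Fintype ι] [Nonempty ι] {α : ι → Type*}
    [∀ j, PseudoMetricSpace (α j)] {r s p : ℝ} (hr : 0 < r) (hrs : r < s)
    (hp : s * log (Fintype.card ι) ≤ p * (s - r)) :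
    Fintype.card ι * r ^ p ≤ s ^ p ∧
      ∀ x y : ∀ j, α j,
        ((⨆ j, dist (x j) (y j)) ≤ r →
          ∑ j, dist (x j) (y j) ^ p ≤ Fintype.card ι * r ^ p) ∧
        (s ≤ ⨆ j, dist (x j) (y j) → s ^ p ≤ ∑ j, dist (x j) (y j) ^ p) := by
  have hs : 0 < s := hr.trans hrs
  have hp0 : 0 ≤ p := nonneg_of_mul_nonneg_left
    ((mul_nonneg hs.le (log_natCast_nonneg _)).trans hp) (sub_pos.2 hrs)
  have hcard : (0 : ℝ) < Fintype.card ι := mod_cast Fintype.card_pos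
  exact ⟨mul_rpow_le_rpow_of_mul_log_le hcard hr hs hp0 hp, fun _ _ ↦
    ⟨sum_rpow_le_card_mul_rpow_of_iSup_le (fun _ ↦ dist_nonneg) hp0,
      rpow_le_sum_rpow_of_le_iSup (fun _ ↦ dist_nonneg) hs.le hp0⟩⟩

/-- Threshold separation for the fast `ℓ∞` distance-matrix construction over a bounded
alphabet: if `p ≥ 2i·ln d` then `d·i^p ≤ (i+1)^p`, and the `ℓ_p^p` value separates
`‖x − y‖_∞ ≤ i` from `‖x − y‖_∞ ≥ i + 1`. -/
theorem linf_threshold_separation (d i : ℕ) (hd : 2 ≤ d) (hi : 1 ≤ i) (p : ℝ)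
    (hp : 2 * i * Real.log d ≤ p) :
    (d : ℝ) * (i : ℝ) ^ p ≤ ((i : ℝ) + 1) ^ p ∧
      ∀ M : ℕ, i ≤ M → ∀ x y : Fin d → ℕ, (∀ j, x j ≤ M) → (∀ j, y j ≤ M) →
        ((⨆ j, |(x j : ℝ) - (y j : ℝ)|) ≤ (i : ℝ) →
          (∑ j, |(x j : ℝ) - (y j : ℝ)| ^ p) ≤ (d : ℝ) * (i : ℝ) ^ p) ∧
        ((i : ℝ) + 1 ≤ (⨆ j, |(x j : ℝ) - (y j : ℝ)|) →
          ((i : ℝ) + 1) ^ p ≤ (∑ j, |(x j : ℝ) - (y j : ℝ)| ^ p) ∧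
            (d : ℝ) * (i : ℝ) ^ p ≤ ((i : ℝ) + 1) ^ p) := by
  have : NeZero d := ⟨by lia⟩
  have hi' : (1 : ℝ) ≤ i := mod_cast hi
  have hlog : ((i : ℝ) + 1) * log (Fintype.card (Fin d)) ≤ p * ((i : ℝ) + 1 - i) :=
    calc
      ((i : ℝ) + 1) * log (Fintype.card (Fin d)) = (i + 1) * log d := by rw [Fintype.card_fin]
      _ ≤ 2 * i * log d := by gcongr; linarith
      _ ≤ p * ((i : ℝ) + 1 - i) := by linarith
  obtain ⟨hpow, hsep⟩ := linf_threshold_separation_general (α := fun _ : Fin d ↦ ℕ)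
    (by linarith) (lt_add_one (i : ℝ)) hlog
  simp only [Fintype.card_fin, Nat.dist_eq] at hpow hsep
  exact ⟨hpow, fun _ _ x y _ _ ↦
    ⟨(hsep x y).1, fun h ↦ ⟨(hsep x y).2 h, hpow⟩⟩⟩
end
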